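/- arXiv:2006.16456 — 2 statements merged into one kernel-verified Lean document; each statement's English description precedes it below -/
import Mathlib

section
/- For every η > 0, δ > 0 and compact K ⊆ S there exists T > 0 such that, for every x ∈ K and every path X ∈ C(ℝ≥0,S) with Π_x(X) > η, one has inf_{0≤t≤T} d(X(t), A) < δ. -/
open Filter Topology Metric Set MeasureTheory
open scoped NNReal

noncomputable section

/-- A deviability density on a topological space `E`. -/
def IsDeviabilityDensity {E : Type*} [TopologicalSpace E] (p : E → ℝ) : Prop :=
  (∀ x, p x ∈ Set.Icc (0:ℝ) 1) ∧ (⨆ x, p x) = 1 ∧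
    ∀ γ ∈ Set.Ioc (0:ℝ) 1, IsCompact {x | γ ≤ p x}

variable {S : Type*} [MetricSpace S]

/-- Time shift `θ_s` on continuous paths. -/
def pshift (s : ℝ≥0) (X : C(ℝ≥0, S)) : C(ℝ≥0, S) :=
  ⟨fun t => X (s + t), X.continuous.comp (continuous_const.add continuous_id)⟩

/-- `Π_{x,t}(y)`. -/
def transDen (Px : S → C(ℝ≥0, S) → ℝ) (x : S) (t : ℝ≥0) (y : S) : ℝ :=
  ⨆ X ∈ {X : C(ℝ≥0, S) | X t = y}, Px x X

/-- The standing assumptions (2.2)--(2.5) of the paper, together with the basic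
assumptions on the family of path deviability densities `Px` and the set `A`. -/
structure DevSetup (S : Type*) [MetricSpace S] (Px : S → C(ℝ≥0, S) → ℝ) (A : Set S) :
    Prop where
  dev : ∀ x, IsDeviabilityDensity (Px x)
  start : ∀ x (X : C(ℝ≥0, S)), X 0 ≠ x → Px x X = 0
  /-- (2.2) upper semicontinuity -/
  usc : UpperSemicontinuous (fun q : S × C(ℝ≥0, S) => Px q.1 q.2)
  /-- (2.2) uniform upper compactness -/
  cpt : ∀ K : Set S, IsCompact K → ∀ γ ∈ Set.Ioc (0:ℝ) 1,
    IsCompact (⋃ x ∈ K, {X : C(ℝ≥0, S) | γ ≤ Px x X})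
  /-- (2.3) the maxitive Markov property -/
  markov : ∀ x (X : C(ℝ≥0, S)) (s : ℝ≥0),
    Px x X = (⨆ X' ∈ {X' : C(ℝ≥0, S) | ∀ u ≤ s, X' u = X u}, Px x X') *
      Px (X s) (pshift s X)
  /-- (2.4) `A` is locally finite -/
  locFin : ∀ K : Set S, IsCompact K → (K ∩ A).Finite
  /-- (2.4)(i) -/
  attract : ∀ x (X : C(ℝ≥0, S)), Px x X = 1 → (⨅ t : ℝ≥0, infDist (X t) A) = 0
  /-- (2.4)(ii) -/
  equil : ∀ a ∈ A, Px a (ContinuousMap.const ℝ≥0 a) = 1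
  /-- (2.4)(iii) -/
  connect : ∀ a ∈ A, ∀ a' ∈ A, ∃ t : ℝ≥0, 0 < t ∧ 0 < transDen Px a t a'
  /-- (2.4)(iv) -/
  nearA : ∀ ε : ℝ, 0 < ε → ∃ δ : ℝ, 0 < δ ∧ ∀ x : S, infDist x A < δ →
    ∃ s₀ s₁ : ℝ≥0, 0 < s₀ ∧ 0 < s₁ ∧ ∃ a ∈ A,
      1 - ε < transDen Px x s₀ a ∧ 1 - ε < transDen Px a s₁ x
  /-- (2.4)(v) -/
  localMove : ∀ x : S, ∀ ε : ℝ, 0 < ε → ∃ δ : ℝ, 0 < δ ∧ ∃ t₀ t₁ : ℝ≥0,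
    ∀ x' : S, dist x x' < δ →
      1 - ε < transDen Px x t₀ x' ∧ 1 - ε < transDen Px x' t₁ x
  /-- (2.5) uniform tightness -/
  tight : ∀ K₁ : Set S, IsCompact K₁ → ∀ ε : ℝ, 0 < ε → ∃ K₂ : Set S, IsCompact K₂ ∧
    Filter.limsup (fun t : ℝ≥0 => ⨆ x ∈ K₁, ⨆ y ∈ K₂ᶜ, transDen Px x t y) atTop < ε

/-!
Paths of density one reach the open set `U`, so by compactness there is a time `n` by which all
paths of density one started in a given compact set have done so, and upper semicontinuity then
bounds by some `ρ < 1` the density of every path from this set that avoids `U` during `[0, n]`. The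
maxitive Markov property turns this into geometric decay: a path which stays in the compact set and
avoids `U` for time `m * n` has density at most `ρ ^ m`. Tightness confines paths of density larger
than `η` to a compact set after a fixed time, hence they hit `U` before the decay contradicts `η`.
-/

theorem biSup_real_le {ι : Type*} {s : Set ι} {f : ι → ℝ} {c : ℝ} (hc : 0 ≤ c)
    (hf : ∀ i ∈ s, f i ≤ c) : ⨆ i ∈ s, f i ≤ c :=
  -- For `i ∉ s` the inner supremum is `sSup ∅ = 0`, which is why `0 ≤ c` is required.
  Real.iSup_le (fun i => Real.iSup_le (hf i) hc) hc

theorem le_biSup_real {ι : Type*} {s : Set ι} {f : ι → ℝ} {c : ℝ} (hf : ∀ i ∈ s, f i ≤ c)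
    {i : ι} (hi : i ∈ s) : f i ≤ ⨆ i ∈ s, f i := by
  refine le_ciSup₂ (f := fun i (_ : i ∈ s) => f i) ⟨c, ?_⟩ i hi
  simpa only [mem_upperBounds, mem_iUnion, mem_range, forall_exists_index, exists_prop, and_imp,
    forall_apply_eq_imp_iff₂] using hf

theorem exists_lt_forall_le_of_isCompact {E α : Type*} [TopologicalSpace E] [LinearOrder α]
    [NoMinOrder α] {f : E → α} {s : Set E} {c : α} (hf : UpperSemicontinuousOn f s)
    (hs : IsCompact s) (hlt : ∀ x ∈ s, f x < c) : ∃ b < c, ∀ x ∈ s, f x ≤ b := by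
  rcases s.eq_empty_or_nonempty with rfl | hne
  · obtain ⟨b, hb⟩ := exists_lt c
    exact ⟨b, hb, by simp⟩
  · obtain ⟨a, ha, hmax⟩ := hf.exists_isMaxOn hne hs
    exact ⟨f a, hlt a ha, fun x hx => hmax hx⟩

section UniformLoss

variable {E : Type*} [TopologicalSpace E] {p : E → C(ℝ≥0, E) → ℝ} {K V : Set E}

theorem isCompact_setOf_mem_and_le
    (husc : UpperSemicontinuous fun q : E × C(ℝ≥0, E) => p q.1 q.2) (hK : IsCompact K) {γ : ℝ}
    (hcpt : IsCompact (⋃ x ∈ K, {X | γ ≤ p x X})) :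
    IsCompact {q : E × C(ℝ≥0, E) | q.1 ∈ K ∧ γ ≤ p q.1 q.2} := by
  have hclosed : IsClosed {q : E × C(ℝ≥0, E) | γ ≤ p q.1 q.2} := husc.isClosed_preimage γ
  convert (hK.prod hcpt).inter_right hclosed using 1
  ext ⟨x, X⟩
  constructor
  · rintro ⟨hx, hX⟩
    exact ⟨⟨hx, mem_biUnion hx hX⟩, hX⟩
  · rintro ⟨⟨hx, -⟩, hX⟩
    exact ⟨hx, hX⟩

theorem isClosed_setOf_mapsTo_snd (hV : IsClosed V) (I : Set ℝ≥0) :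
    IsClosed {q : E × C(ℝ≥0, E) | MapsTo q.2 I V} :=
  (ContinuousMap.isClosed_setOfPred_mapsTo hV I).preimage continuous_snd

theorem exists_nat_forall_mapsTo_lt_one (hp : ∀ x X, p x X ≤ 1)
    (husc : UpperSemicontinuous fun q : E × C(ℝ≥0, E) => p q.1 q.2) (hK : IsCompact K)
    (hcpt : IsCompact (⋃ x ∈ K, {X | 1 ≤ p x X})) (hV : IsClosed V)
    (hexit : ∀ x X, p x X = 1 → ∃ t, X t ∉ V) :
    ∃ n : ℕ, ∀ x ∈ K, ∀ X : C(ℝ≥0, E), MapsTo X (Iic (n : ℝ≥0)) V → p x X < 1 := by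
  let stays (n : ℕ) : Set (E × C(ℝ≥0, E)) := {q | MapsTo q.2 (Iic (n : ℝ≥0)) V}
  have hstays : Antitone stays := fun m n hmn q hq =>
    hq.mono_left (Iic_subset_Iic.2 (Nat.cast_le.2 hmn))
  have hempty : {q : E × C(ℝ≥0, E) | q.1 ∈ K ∧ 1 ≤ p q.1 q.2} ∩ ⋂ n, stays n = ∅ := by
    refine eq_empty_of_forall_notMem fun ⟨x, X⟩ ⟨⟨_, hX⟩, hall⟩ => ?_
    obtain ⟨t, ht⟩ := hexit x X ((hp x X).antisymm hX)
    obtain ⟨n, hn⟩ := exists_nat_ge t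
    exact ht (mem_iInter.1 hall n hn)
  obtain ⟨n, hn⟩ := (isCompact_setOf_mem_and_le husc hK hcpt).elim_directed_family_closed stays
    (fun n => isClosed_setOf_mapsTo_snd hV _) hempty hstays.directed_ge
  refine ⟨n, fun x hx X hX => lt_of_not_ge fun hge => ?_⟩
  exact eq_empty_iff_forall_notMem.1 hn (x, X) ⟨⟨hx, hge⟩, hX⟩

theorem exists_nat_forall_mapsTo_le (hp : ∀ x X, p x X ≤ 1)
    (husc : UpperSemicontinuous fun q : E × C(ℝ≥0, E) => p q.1 q.2) (hK : IsCompact K)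
    (hcpt : ∀ γ ∈ Ioc (0 : ℝ) 1, IsCompact (⋃ x ∈ K, {X | γ ≤ p x X})) (hV : IsClosed V)
    (hexit : ∀ x X, p x X = 1 → ∃ t, X t ∉ V) :
    ∃ (n : ℕ) (ρ : ℝ), 0 ≤ ρ ∧ ρ < 1 ∧
      ∀ x ∈ K, ∀ X : C(ℝ≥0, E), MapsTo X (Iic (n : ℝ≥0)) V → p x X ≤ ρ := by
  obtain ⟨n, hn⟩ := exists_nat_forall_mapsTo_lt_one hp husc hK (hcpt 1 (by norm_num)) hV hexit
  have hcompact := (isCompact_setOf_mem_and_le husc hK (hcpt (1 / 2) (by norm_num))).inter_right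
    (isClosed_setOf_mapsTo_snd hV (Iic (n : ℝ≥0)))
  obtain ⟨b, hb, hle⟩ := exists_lt_forall_le_of_isCompact (husc.upperSemicontinuousOn _) hcompact
    fun q hq => hn q.1 hq.1.1 q.2 hq.2
  refine ⟨n, max (1 / 2) b, by positivity, max_lt (by norm_num) hb, fun x hx X hX => ?_⟩
  rcases le_total (p x X) (1 / 2) with hhalf | hhalf
  · exact hhalf.trans (le_max_left _ _)
  · exact (hle (x, X) ⟨⟨hx, hhalf⟩, hX⟩).trans (le_max_right _ _)

end UniformLoss

section Tightness

variable {Px : S → C(ℝ≥0, S) → ℝ}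

theorem le_transDen (hPx : ∀ x X, Px x X ≤ 1) (x : S) (t : ℝ≥0) (X : C(ℝ≥0, S)) :
    Px x X ≤ transDen Px x t (X t) :=
  le_biSup_real (s := {Y : C(ℝ≥0, S) | Y t = X t}) (fun Y _ => hPx x Y) rfl

theorem transDen_le_one (hPx : ∀ x X, Px x X ≤ 1) (x : S) (t : ℝ≥0) (y : S) :
    transDen Px x t y ≤ 1 :=
  biSup_real_le zero_le_one fun X _ => hPx x X

theorem biSup_transDen_le_one (hPx : ∀ x X, Px x X ≤ 1) (x : S) (t : ℝ≥0) (B : Set S) :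
    ⨆ y ∈ B, transDen Px x t y ≤ 1 :=
  biSup_real_le zero_le_one fun y _ => transDen_le_one hPx x t y

theorem le_biSup_biSup_transDen (hPx : ∀ x X, Px x X ≤ 1) {K B : Set S} {x : S} (hx : x ∈ K)
    {t : ℝ≥0} {X : C(ℝ≥0, S)} (hX : X t ∈ B) :
    Px x X ≤ ⨆ x ∈ K, ⨆ y ∈ B, transDen Px x t y :=
  calc Px x X ≤ transDen Px x t (X t) := le_transDen hPx x t X
    _ ≤ ⨆ y ∈ B, transDen Px x t y :=
      le_biSup_real (fun y _ => transDen_le_one hPx x t y) hX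
    _ ≤ ⨆ x ∈ K, ⨆ y ∈ B, transDen Px x t y :=
      le_biSup_real (f := fun x => ⨆ y ∈ B, transDen Px x t y)
        (fun x _ => biSup_transDen_le_one hPx x t B) hx

theorem eventually_mem_of_limsup_transDen_lt (hPx : ∀ x X, Px x X ≤ 1) {K L : Set S} {η : ℝ}
    (hlim : limsup (fun t : ℝ≥0 => ⨆ x ∈ K, ⨆ y ∈ Lᶜ, transDen Px x t y) atTop < η) :
    ∀ᶠ t in atTop, ∀ x ∈ K, ∀ X, η < Px x X → X t ∈ L := by
  have hbdd : IsBoundedUnder (· ≤ ·) atTop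
      fun t : ℝ≥0 => ⨆ x ∈ K, ⨆ y ∈ Lᶜ, transDen Px x t y :=
    isBoundedUnder_of ⟨1, fun t =>
      biSup_real_le zero_le_one fun x _ => biSup_transDen_le_one hPx x t Lᶜ⟩
  filter_upwards [eventually_lt_of_limsup_lt hlim hbdd] with t ht x hx X hX
  by_contra hmem
  exact lt_irrefl η (hX.trans_le (le_biSup_biSup_transDen hPx hx hmem) |>.trans ht)

end Tightness

/-- The maxitive Markov property (2.3): the density of a path is the density of the event of
following it up to time `s`, times the density of its continuation from `X s`. -/
def IsMaxitiveMarkov (Px : S → C(ℝ≥0, S) → ℝ) : Prop :=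
  ∀ x (X : C(ℝ≥0, S)) (s : ℝ≥0),
    Px x X = (⨆ X' ∈ {X' : C(ℝ≥0, S) | ∀ u ≤ s, X' u = X u}, Px x X') * Px (X s) (pshift s X)

namespace IsMaxitiveMarkov

variable {Px : S → C(ℝ≥0, S) → ℝ}

theorem le_mul_pshift (hM : IsMaxitiveMarkov Px) (hPx : ∀ x X, 0 ≤ Px x X) {V : Set S}
    {s : ℝ≥0} {x : S} {ρ : ℝ} (hρ : 0 ≤ ρ) (hle : ∀ X : C(ℝ≥0, S), MapsTo X (Iic s) V → Px x X ≤ ρ)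
    {X : C(ℝ≥0, S)} (hX : MapsTo X (Iic s) V) :
    Px x X ≤ ρ * Px (X s) (pshift s X) := by
  rw [hM x X s]
  refine mul_le_mul_of_nonneg_right (biSup_real_le hρ fun X' hX' => hle X' fun u hu => ?_)
    (hPx _ _)
  rw [hX' u hu]
  exact hX hu

theorem le_pshift (hM : IsMaxitiveMarkov Px) (hPx : ∀ x X, Px x X ∈ Icc 0 1) (x : S)
    (X : C(ℝ≥0, S)) (s : ℝ≥0) : Px x X ≤ Px (X s) (pshift s X) := by
  simpa only [one_mul] using hM.le_mul_pshift (fun x X => (hPx x X).1) zero_le_one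
    (fun X _ => (hPx x X).2) (mapsTo_univ X (Iic s))

theorem le_pow_of_mapsTo (hM : IsMaxitiveMarkov Px) (hPx : ∀ x X, Px x X ∈ Icc 0 1)
    {K V : Set S} {s : ℝ≥0} {ρ : ℝ} (hρ : 0 ≤ ρ)
    (hle : ∀ x ∈ K, ∀ X : C(ℝ≥0, S), MapsTo X (Iic s) V → Px x X ≤ ρ) (m : ℕ) {x : S}
    (hx : x ∈ K) {X : C(ℝ≥0, S)} (hXK : ∀ t, X t ∈ K) (hXV : MapsTo X (Iic (m * s)) V) :
    Px x X ≤ ρ ^ m := by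
  induction m generalizing x X with
  | zero => simpa only [pow_zero] using (hPx x X).2
  | succ m ih =>
    have hsplit : ((m + 1 : ℕ) : ℝ≥0) * s = s + m * s := by push_cast; ring
    rw [hsplit] at hXV
    have hfirst : MapsTo X (Iic s) V := hXV.mono_left (Iic_subset_Iic.2 le_self_add)
    have hrest : MapsTo (pshift s X) (Iic (m * s)) V := fun t ht => hXV (add_le_add_right ht s)
    calc Px x X ≤ ρ * Px (X s) (pshift s X) :=
          hM.le_mul_pshift (fun x X => (hPx x X).1) hρ (hle x hx) hfirst
      _ ≤ ρ * ρ ^ m :=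
          mul_le_mul_of_nonneg_left (ih (hXK s) (fun t => hXK (s + t)) hrest) hρ
      _ = ρ ^ (m + 1) := (pow_succ' ρ m).symm

end IsMaxitiveMarkov

theorem stmt1_general {Px : S → C(ℝ≥0, S) → ℝ} (hPx : ∀ x X, Px x X ∈ Icc 0 1)
    (hM : IsMaxitiveMarkov Px) (husc : UpperSemicontinuous fun q : S × C(ℝ≥0, S) => Px q.1 q.2)
    {K L : Set S} (hL : IsCompact L)
    (hcpt : ∀ γ ∈ Ioc (0 : ℝ) 1, IsCompact (⋃ x ∈ L, {X | γ ≤ Px x X}))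
    {η : ℝ} (hη : 0 < η) (htight : ∀ᶠ t in atTop, ∀ x ∈ K, ∀ X, η < Px x X → X t ∈ L)
    {U : Set S} (hU : IsOpen U) (hhit : ∀ x X, Px x X = 1 → ∃ t, X t ∈ U) :
    ∃ T : ℝ≥0, 0 < T ∧ ∀ x ∈ K, ∀ X : C(ℝ≥0, S), η < Px x X → ∃ t ≤ T, X t ∈ U := by
  obtain ⟨n, ρ, hρ0, hρ1, hloss⟩ := exists_nat_forall_mapsTo_le (fun x X => (hPx x X).2) husc hL
    hcpt hU.isClosed_compl (by simpa only [notMem_compl_iff] using hhit)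
  obtain ⟨m, hm⟩ := exists_pow_lt_of_lt_one hη hρ1
  obtain ⟨t₁, ht₁⟩ := eventually_atTop.1 htight
  refine ⟨t₁ + m * n + 1, by positivity, fun x hx X hX => ?_⟩
  by_contra! havoid
  have hconfined : ∀ t, pshift t₁ X t ∈ L := fun t => ht₁ (t₁ + t) le_self_add x hx X hX
  have hmaps : MapsTo (pshift t₁ X) (Iic (m * n)) Uᶜ := fun t ht =>
    havoid (t₁ + t) ((add_le_add_right ht t₁).trans le_self_add)
  refine hX.not_ge ?_
  calc Px x X ≤ Px (X t₁) (pshift t₁ X) := hM.le_pshift hPx x X t₁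
    _ ≤ ρ ^ m := hM.le_pow_of_mapsTo hPx hρ0 hloss m (ht₁ t₁ le_rfl x hx X hX) hconfined hmaps
    _ ≤ η := hm.le

namespace DevSetup

variable {Px : S → C(ℝ≥0, S) → ℝ} {A : Set S}

theorem exists_infDist_lt (hyp : DevSetup S Px A) {δ : ℝ} (hδ : 0 < δ) (x : S)
    (X : C(ℝ≥0, S)) (hX : Px x X = 1) : ∃ t, infDist (X t) A < δ :=
  exists_lt_of_ciInf_lt ((hyp.attract x X hX).trans_lt hδ)

theorem exists_isCompact_eventually_mem (hyp : DevSetup S Px A) {η : ℝ} (hη : 0 < η) {K : Set S}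
    (hK : IsCompact K) :
    ∃ L, IsCompact L ∧ ∀ᶠ t in atTop, ∀ x ∈ K, ∀ X, η < Px x X → X t ∈ L := by
  obtain ⟨L, hL, hlim⟩ := hyp.tight K hK η hη
  exact ⟨L, hL, eventually_mem_of_limsup_transDen_lt (fun x X => ((hyp.dev x).1 X).2) hlim⟩

end DevSetup

theorem stmt1 (Px : S → C(ℝ≥0, S) → ℝ) (A : Set S) (hyp : DevSetup S Px A) :
    ∀ η : ℝ, 0 < η → ∀ δ : ℝ, 0 < δ → ∀ K : Set S, IsCompact K →
      ∃ T : ℝ≥0, 0 < T ∧ ∀ x ∈ K, ∀ X : C(ℝ≥0, S), η < Px x X →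
        ∃ t ≤ T, infDist (X t) A < δ := by
  intro η hη δ hδ K hK
  obtain ⟨L, hL, htight⟩ := hyp.exists_isCompact_eventually_mem hη hK
  exact stmt1_general (fun x => (hyp.dev x).1) hyp.markov hyp.usc hL (hyp.cpt L hL) hη htight
    (isOpen_lt (continuous_infDist_pt A) continuous_const) (hyp.exists_infDist_lt hδ)
end
end

section
/- The long-time transition limit satisfies the idempotent Chapman–Kolmogorov equation: for all x, y ∈ S, Π(x,y) = sup_{z∈S} Π(x,z) · Π(z,y). -/
open Filter Topology Metric Set MeasureTheory
open scoped NNReal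

noncomputable section

variable {S : Type*} [MetricSpace S]

/-!
Write `p x t y = Π_{x,t}(y)`. Concatenating paths turns the maxitive Markov property into the
Chapman–Kolmogorov equation `p x (s + t) y = sup_z p x s z * p z t y` at finite times, and letting
`s = t → ∞` gives `Π(x,z) * Π(z,y) ≤ Π(x,y)`. Conversely, if `c < Π(x,y)`, then at each large time
`t` some `z_t` has `c < p x t z_t * p z_t t y`, and tightness keeps `z_t` in a compact set. Let `z`
be a cluster point of `z_t`. When `z_t` is close to `z`, inserting the round trip `z_t → z → z_t`
costs a factor arbitrarily close to one and only shifts the times by constants, so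
`c ≤ Π(x,z) * Π(z,y)` up to that factor.
-/

section BoundedSupremum

variable {ι κ : Type*} {s : Set ι} {f : ι → ℝ} {c : ℝ}

lemma biSup_le_of_nonneg (hc : 0 ≤ c) (h : ∀ i ∈ s, f i ≤ c) : ⨆ i ∈ s, f i ≤ c :=
  Real.iSup_le (fun i => Real.iSup_le (h i) hc) hc

lemma le_biSup_of_forall_le (hc : 0 ≤ c) (h : ∀ i, f i ≤ c) {i : ι} (hi : i ∈ s) :
    f i ≤ ⨆ i ∈ s, f i := by
  have hbdd : BddAbove (range fun i => ⨆ _ : i ∈ s, f i) :=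
    ⟨c, forall_mem_range.2 fun j => Real.iSup_le (fun _ => h j) hc⟩
  simpa only [ciSup_pos hi] using le_ciSup hbdd i

lemma biSup_mul_biSup_le {t : Set κ} {g : κ → ℝ} (hf : ∀ i, 0 ≤ f i) (hg : ∀ j, 0 ≤ g j)
    (hc : 0 ≤ c) (h : ∀ i ∈ s, ∀ j ∈ t, f i * g j ≤ c) :
    (⨆ i ∈ s, f i) * (⨆ j ∈ t, g j) ≤ c := by
  have hg_sup : 0 ≤ ⨆ j ∈ t, g j := Real.iSup_nonneg fun j => Real.iSup_nonneg fun _ => hg j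
  simp only [Real.iSup_mul_of_nonneg hg_sup]
  refine biSup_le_of_nonneg hc fun i hi => ?_
  simp only [Real.mul_iSup_of_nonneg (hf i)]
  exact biSup_le_of_nonneg hc (h i hi)

end BoundedSupremum

lemma exists_frequently_prod_nhds_of_isCompact {α E : Type*} [TopologicalSpace E] {l : Filter α}
    {K : Set E} (hK : IsCompact K) {Q : α → E → Prop} (h : ∃ᶠ a in l, ∃ z ∈ K, Q a z) :
    ∃ z ∈ K, ∃ᶠ q in l ×ˢ 𝓝 z, Q q.1 q.2 := by
  contrapose! h
  have hnhdsSet : ∀ᶠ q in l ×ˢ 𝓝ˢ K, ¬ Q q.1 q.2 := hK.mem_prod_nhdsSet_of_forall h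
  exact hnhdsSet.curry.mono fun _ ha => ha.self_of_nhdsSet

lemma tendsto_add_self_atTop {T : Type*} [Add T] [Preorder T] [CanonicallyOrderedAdd T] :
    Tendsto (fun t : T => t + t) atTop atTop :=
  tendsto_atTop_mono (fun _ => le_self_add) tendsto_id

section Transition

variable {E T : Type*}

/-- Transition densities `p x t y`, from `x` to `y` in time `t`, of a maxitive (idempotent) Markov
process: they take values in `[0, 1]` and satisfy the Chapman–Kolmogorov equation in which the
supremum replaces the integral. The equation is stated with `IsLUB` to avoid the junk value of a
real `⨆`. -/
structure IsMaxitiveTransition [Add T] (p : E → T → E → ℝ) : Prop where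
  nonneg : ∀ x t y, 0 ≤ p x t y
  le_one : ∀ x t y, p x t y ≤ 1
  isLUB_add : ∀ x s t y, IsLUB (range fun z => p x s z * p z t y) (p x (s + t) y)

/-- Nearby points communicate at almost no cost: the round trip from a point near `z` to `z` and
back, in times depending only on `z` and `r`, has density above any prescribed `r < 1`. This is
(2.4)(v) with a single bound for the round trip instead of one for each leg. -/
def IsLocallyCommunicating [TopologicalSpace E] (p : E → T → E → ℝ) : Prop :=
  ∀ z, ∀ r ∈ Ico (0 : ℝ) 1, ∃ t₀ t₁, ∀ᶠ w in 𝓝 z, r < p w t₁ z * p z t₀ w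

/-- Tightness of the transition densities at large times: (2.5) for a single starting point, with
an eventual bound in place of the upper limit. -/
def IsEventuallyTight [TopologicalSpace E] [Preorder T] (p : E → T → E → ℝ) : Prop :=
  ∀ x, ∀ ε > (0 : ℝ), ∃ K, IsCompact K ∧ ∀ᶠ t in atTop, ∀ y ∉ K, p x t y < ε

namespace IsMaxitiveTransition

lemma mul_le_add [Add T] {p : E → T → E → ℝ} (hp : IsMaxitiveTransition p) (x : E) (s : T) (z : E)
    (t : T) (y : E) : p x s z * p z t y ≤ p x (s + t) y :=
  (hp.isLUB_add x s t y).1 (mem_range_self z)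

lemma round_trip_mul_le [Add T] {p : E → T → E → ℝ} (hp : IsMaxitiveTransition p) (x y z w : E)
    (s t₁ t₀ t : T) :
    (p w t₁ z * p z t₀ w) * (p x s w * p w t y) ≤ p x (s + t₁) z * p z (t₀ + t) y :=
  calc (p w t₁ z * p z t₀ w) * (p x s w * p w t y)
      = (p x s w * p w t₁ z) * (p z t₀ w * p w t y) := by ring
    _ ≤ p x (s + t₁) z * p z (t₀ + t) y :=
      mul_le_mul (hp.mul_le_add x s w t₁ z) (hp.mul_le_add z t₀ w t y)
        (mul_nonneg (hp.nonneg _ _ _) (hp.nonneg _ _ _)) (hp.nonneg _ _ _)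

variable [Add T] [Preorder T] {p : E → T → E → ℝ} {P : E → E → ℝ}

lemma limit_nonneg [NeBot (atTop : Filter T)] (hp : IsMaxitiveTransition p)
    (hP : ∀ x y, Tendsto (fun t => p x t y) atTop (𝓝 (P x y))) (x y : E) : 0 ≤ P x y :=
  ge_of_tendsto' (hP x y) fun t => hp.nonneg x t y

variable [CanonicallyOrderedAdd T]

lemma limit_mul_limit_le [NeBot (atTop : Filter T)] (hp : IsMaxitiveTransition p)
    (hP : ∀ x y, Tendsto (fun t => p x t y) atTop (𝓝 (P x y))) (x z y : E) :
    P x z * P z y ≤ P x y :=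
  le_of_tendsto_of_tendsto' ((hP x z).mul (hP z y)) ((hP x y).comp tendsto_add_self_atTop)
    fun t => hp.mul_le_add x t z t y

variable [TopologicalSpace E]

lemma exists_frequently_lt_mul [NeBot (atTop : Filter T)] (hp : IsMaxitiveTransition p)
    (htight : IsEventuallyTight p) {x y : E} {L c : ℝ}
    (hL : Tendsto (fun t => p x t y) atTop (𝓝 L)) (hc : 0 < c) (hcL : c < L) :
    ∃ z, ∃ᶠ q in atTop ×ˢ 𝓝 z, c < p x q.1 q.2 * p q.2 q.1 y := by
  obtain ⟨K, hK, houtside⟩ := htight x c hc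
  have hlarge : ∀ᶠ t in atTop, c < p x (t + t) y :=
    (hL.comp tendsto_add_self_atTop).eventually_const_lt hcL
  have hmid : ∀ᶠ t in atTop, ∃ z ∈ K, c < p x t z * p z t y := by
    filter_upwards [houtside, hlarge] with t hout hct
    obtain ⟨_, ⟨z, rfl⟩, hz, -⟩ := (hp.isLUB_add x t t y).exists_between hct
    have hcz : c < p x t z :=
      hz.trans_le (mul_le_of_le_one_right (hp.nonneg x t z) (hp.le_one z t y))
    exact ⟨z, not_not.1 fun hzK => (hout z hzK).not_gt hcz, hz⟩
  obtain ⟨z, -, hz⟩ := exists_frequently_prod_nhds_of_isCompact hK hmid.frequently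
  exact ⟨z, hz⟩

lemma mul_le_limit_mul_limit (hp : IsMaxitiveTransition p) (hloc : IsLocallyCommunicating p)
    (hP : ∀ x y, Tendsto (fun t => p x t y) atTop (𝓝 (P x y))) {x y z : E} {r c : ℝ}
    (hr : r ∈ Ico (0 : ℝ) 1) (hc : 0 ≤ c)
    (hfreq : ∃ᶠ q in atTop ×ˢ 𝓝 z, c < p x q.1 q.2 * p q.2 q.1 y) :
    r * c ≤ P x z * P z y := by
  obtain ⟨t₀, t₁, hround⟩ := hloc z r hr
  have hright : Tendsto (fun t => t + t₁) atTop atTop :=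
    tendsto_atTop_mono (fun _ => le_self_add) tendsto_id
  have hleft : Tendsto (fun t => t₀ + t) atTop atTop :=
    tendsto_atTop_mono (fun _ => le_add_self) tendsto_id
  have hlim : Tendsto (fun t => p x (t + t₁) z * p z (t₀ + t) y) atTop (𝓝 (P x z * P z y)) :=
    ((hP x z).comp hright).mul ((hP z y).comp hleft)
  refine ge_of_tendsto_of_frequently (hlim.comp tendsto_fst)
    ((hfreq.and_eventually (hround.prod_inr atTop)).mono ?_)
  rintro ⟨t, w⟩ ⟨hmid, hrw⟩
  exact (mul_le_mul hrw.le hmid.le hc (hr.1.trans hrw.le)).trans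
    (hp.round_trip_mul_le x y z w t t₁ t₀ t)

theorem limit_eq_iSup_mul [NeBot (atTop : Filter T)] (hp : IsMaxitiveTransition p)
    (hloc : IsLocallyCommunicating p) (htight : IsEventuallyTight p)
    (hP : ∀ x y, Tendsto (fun t => p x t y) atTop (𝓝 (P x y))) (x y : E) :
    P x y = ⨆ z, P x z * P z y := by
  have hle : ∀ z, P x z * P z y ≤ P x y := fun z => hp.limit_mul_limit_le hP x z y
  have hnonneg : ∀ x y, 0 ≤ P x y := hp.limit_nonneg hP
  have hbdd : BddAbove (range fun z => P x z * P z y) := ⟨P x y, forall_mem_range.2 hle⟩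
  have hsup : 0 ≤ ⨆ z, P x z * P z y :=
    Real.iSup_nonneg fun z => mul_nonneg (hnonneg x z) (hnonneg z y)
  refine le_antisymm ?_ (Real.iSup_le hle (hnonneg x y))
  rw [← one_mul (P x y)]
  refine mul_le_of_forall_lt_of_nonneg zero_le_one hsup fun r hr₀ hr₁ c hc hcP => ?_
  obtain rfl | hc := hc.eq_or_lt
  · rwa [mul_zero]
  obtain ⟨z, hz⟩ := hp.exists_frequently_lt_mul htight (hP x y) hc hcP
  exact (hp.mul_le_limit_mul_limit hloc hP ⟨hr₀, hr₁⟩ hc.le hz).trans (le_ciSup hbdd z)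

end IsMaxitiveTransition

end Transition

lemma exists_pshift_eq (X Y : C(ℝ≥0, S)) {s : ℝ≥0} (h : Y 0 = X s) :
    ∃ Z : C(ℝ≥0, S), (∀ u ≤ s, Z u = X u) ∧ pshift s Z = Y := by
  have hcont : Continuous fun u => if u ≤ s then X u else Y (u - s) :=
    Continuous.if_le (by fun_prop) (by fun_prop) continuous_id continuous_const
      fun u hu => by rw [hu, tsub_self, h]
  refine ⟨⟨_, hcont⟩, fun u hu => if_pos hu, ContinuousMap.ext fun t => ?_⟩
  change (if s + t ≤ s then X (s + t) else Y (s + t - s)) = Y t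
  obtain rfl | ht := eq_zero_or_pos t
  · rw [add_zero, if_pos le_rfl, h]
  · rw [if_neg (lt_add_of_pos_right s ht).not_ge, add_tsub_cancel_left]

/-- A maxitive Markov family of path densities: `Px x` takes values in `[0, 1]`, is carried by the
paths that start at `x`, and satisfies the maxitive Markov property (2.3). -/
structure IsMaxitiveMarkov_s3 (Px : S → C(ℝ≥0, S) → ℝ) : Prop where
  nonneg : ∀ x X, 0 ≤ Px x X
  le_one : ∀ x X, Px x X ≤ 1
  eq_zero_of_ne : ∀ x (X : C(ℝ≥0, S)), X 0 ≠ x → Px x X = 0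
  markov : ∀ x (X : C(ℝ≥0, S)) (s : ℝ≥0),
    Px x X = (⨆ X' ∈ {X' : C(ℝ≥0, S) | ∀ u ≤ s, X' u = X u}, Px x X') *
      Px (X s) (pshift s X)

namespace IsMaxitiveMarkov_s3

variable {Px : S → C(ℝ≥0, S) → ℝ}

lemma le_biSup (h : IsMaxitiveMarkov_s3 Px) (x : S) {F : Set C(ℝ≥0, S)} {X : C(ℝ≥0, S)}
    (hX : X ∈ F) : Px x X ≤ ⨆ X' ∈ F, Px x X' :=
  le_biSup_of_forall_le zero_le_one (h.le_one x) hX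

lemma le_transDen (h : IsMaxitiveMarkov_s3 Px) (x : S) {t : ℝ≥0} {y : S} {X : C(ℝ≥0, S)}
    (hX : X t = y) : Px x X ≤ transDen Px x t y :=
  h.le_biSup x hX

lemma transDen_nonneg (h : IsMaxitiveMarkov_s3 Px) (x : S) (t : ℝ≥0) (y : S) :
    0 ≤ transDen Px x t y :=
  Real.iSup_nonneg fun X => Real.iSup_nonneg fun _ => h.nonneg x X

lemma transDen_le_one (h : IsMaxitiveMarkov_s3 Px) (x : S) (t : ℝ≥0) (y : S) :
    transDen Px x t y ≤ 1 :=
  biSup_le_of_nonneg zero_le_one fun X _ => h.le_one x X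

lemma le_transDen_mul_transDen (h : IsMaxitiveMarkov_s3 Px) (x : S) (X : C(ℝ≥0, S)) (s t : ℝ≥0) :
    Px x X ≤ transDen Px x s (X s) * transDen Px (X s) t (X (s + t)) := by
  have hpast : ⨆ X' ∈ {X' : C(ℝ≥0, S) | ∀ u ≤ s, X' u = X u}, Px x X' ≤
      transDen Px x s (X s) :=
    biSup_le_of_nonneg (h.transDen_nonneg x s (X s)) fun X' hX' => h.le_transDen x (hX' s le_rfl)
  rw [h.markov x X s]
  exact mul_le_mul hpast (h.le_transDen (X s) rfl) (h.nonneg _ _) (h.transDen_nonneg _ _ _)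

lemma mul_le_transDen_add (h : IsMaxitiveMarkov_s3 Px) (x : S) {z y : S} {s t : ℝ≥0}
    {X Y : C(ℝ≥0, S)} (hX : X s = z) (hY : Y t = y) :
    Px x X * Px z Y ≤ transDen Px x (s + t) y := by
  by_cases hYz : Y 0 = z
  · obtain ⟨Z, hZX, hZY⟩ := exists_pshift_eq X Y (hYz.trans hX.symm)
    have hZ : Z (s + t) = y := (DFunLike.congr_fun hZY t).trans hY
    calc Px x X * Px z Y
        ≤ (⨆ X' ∈ {X' : C(ℝ≥0, S) | ∀ u ≤ s, X' u = Z u}, Px x X') * Px z Y :=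
          mul_le_mul_of_nonneg_right (h.le_biSup x fun u hu => (hZX u hu).symm) (h.nonneg z Y)
      _ = Px x Z := by rw [h.markov x Z s, hZY, hZX s le_rfl, hX]
      _ ≤ transDen Px x (s + t) y := h.le_transDen x hZ
  · rw [h.eq_zero_of_ne z Y hYz, mul_zero]
    exact h.transDen_nonneg x (s + t) y

lemma isMaxitiveTransition (h : IsMaxitiveMarkov_s3 Px) : IsMaxitiveTransition (transDen Px) where
  nonneg := h.transDen_nonneg
  le_one := h.transDen_le_one
  isLUB_add x s t y := by
    refine ⟨forall_mem_range.2 fun z => ?_, fun c hc => ?_⟩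
    · exact biSup_mul_biSup_le (h.nonneg x) (h.nonneg z) (h.transDen_nonneg x (s + t) y)
        fun X hX Y hY => h.mul_le_transDen_add x hX hY
    · rw [mem_upperBounds, forall_mem_range] at hc
      have hc₀ : 0 ≤ c :=
        (mul_nonneg (h.transDen_nonneg x s x) (h.transDen_nonneg x t y)).trans (hc x)
      refine biSup_le_of_nonneg hc₀ fun X (hX : X (s + t) = y) => ?_
      exact (h.le_transDen_mul_transDen x X s t).trans (hX ▸ hc (X s))

end IsMaxitiveMarkov_s3

namespace DevSetup

variable {Px : S → C(ℝ≥0, S) → ℝ} {A : Set S}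

lemma isMaxitiveMarkov (hyp : DevSetup S Px A) : IsMaxitiveMarkov_s3 Px where
  nonneg x X := ((hyp.dev x).1 X).1
  le_one x X := ((hyp.dev x).1 X).2
  eq_zero_of_ne := hyp.start
  markov := hyp.markov

lemma isLocallyCommunicating (hyp : DevSetup S Px A) : IsLocallyCommunicating (transDen Px) := by
  rintro z r ⟨hr₀, hr₁⟩
  obtain ⟨δ, hδ, t₀, t₁, hmove⟩ := hyp.localMove z ((1 - r) / 2) (by linarith)
  refine ⟨t₀, t₁, ?_⟩
  filter_upwards [ball_mem_nhds z hδ] with w hw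
  obtain ⟨hzw, hwz⟩ := hmove w (mem_ball'.1 hw)
  calc r < (1 - (1 - r) / 2) * (1 - (1 - r) / 2) := by nlinarith [sq_pos_of_pos (sub_pos.2 hr₁)]
    _ ≤ transDen Px w t₁ z * transDen Px z t₀ w :=
      mul_le_mul hwz.le hzw.le (by linarith) (hyp.isMaxitiveMarkov.transDen_nonneg w t₁ z)

lemma isEventuallyTight (hyp : DevSetup S Px A) : IsEventuallyTight (transDen Px) := by
  intro x ε hε
  obtain ⟨K, hK, hlimsup⟩ := hyp.tight {x} isCompact_singleton ε hε
  have hle : ∀ x' t y, transDen Px x' t y ≤ 1 := hyp.isMaxitiveMarkov.transDen_le_one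
  have hout : ∀ t x', ⨆ y ∈ Kᶜ, transDen Px x' t y ≤ 1 := fun t x' =>
    biSup_le_of_nonneg zero_le_one fun y _ => hle x' t y
  have hbdd : IsBoundedUnder (· ≤ ·) atTop fun t : ℝ≥0 =>
      ⨆ x' ∈ ({x} : Set S), ⨆ y ∈ Kᶜ, transDen Px x' t y :=
    isBoundedUnder_of ⟨1, fun t => biSup_le_of_nonneg zero_le_one fun x' _ => hout t x'⟩
  refine ⟨K, hK, (eventually_lt_of_limsup_lt hlimsup hbdd).mono fun t ht y hy => ?_⟩
  calc transDen Px x t y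
      ≤ ⨆ y ∈ Kᶜ, transDen Px x t y := le_biSup_of_forall_le zero_le_one (hle x t) hy
    _ ≤ ⨆ x' ∈ ({x} : Set S), ⨆ y ∈ Kᶜ, transDen Px x' t y :=
      le_biSup_of_forall_le (f := fun x' => ⨆ y ∈ Kᶜ, transDen Px x' t y) zero_le_one (hout t)
        (mem_singleton x)
    _ < ε := ht

end DevSetup

theorem stmt3_general {Px : S → C(ℝ≥0, S) → ℝ} (hPx : IsMaxitiveMarkov_s3 Px)
    (hloc : IsLocallyCommunicating (transDen Px)) (htight : IsEventuallyTight (transDen Px))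
    {PL : S → S → ℝ}
    (hPL : ∀ x y : S, Tendsto (fun t : ℝ≥0 => transDen Px x t y) atTop (𝓝 (PL x y))) :
    ∀ x y : S, PL x y = ⨆ z : S, PL x z * PL z y :=
  hPx.isMaxitiveTransition.limit_eq_iSup_mul hloc htight hPL

theorem stmt3 (Px : S → C(ℝ≥0, S) → ℝ) (A : Set S) (hyp : DevSetup S Px A)
    (PL : S → S → ℝ)
    (hPL : ∀ x y : S, Tendsto (fun t : ℝ≥0 => transDen Px x t y) atTop (𝓝 (PL x y))) :
    ∀ x y : S, PL x y = ⨆ z : S, PL x z * PL z y := by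
  exact stmt3_general hyp.isMaxitiveMarkov hyp.isLocallyCommunicating hyp.isEventuallyTight hPL
end
end
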